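/- Let Θ ⊆ ℝ^n be a nearly convex set, and let F : ℝ^n ⇒ ℝ^p and G : ℝ^n ⇒ ℝ^q be nearly convex set-valued mappings with ri(dom F) ∩ ri(dom G) ∩ ri Θ ≠ ∅. Define Ψ : ℝ^n × ℝ^n × ℝ^q ⇒ ℝ^p by Ψ(x, u, y) = F(x + u) if x ∈ Θ and y ∈ G(x), and Ψ(x, u, y) = ∅ otherwise. Then Ψ is a nearly convex set-valued mapping. -/

import Mathlib

/-!
The graph of `Ψ` is the set of `((x, u, y), z)` with `x ∈ Θ`, `(x, y) ∈ gph G` and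
`(x + u, z) ∈ gph F`. If `D`, `CG`, `CF` are convex sets witnessing the near convexity of `Θ`,
`gph G`, `gph F`, the candidate convex set `K` is obtained by replacing the three sets with these
witnesses. To see that `gph Ψ` lies in the closure of `K` it suffices to find one point `P₀` whose
three components lie in `ri D`, `ri CG` and `ri CF`: for `P ∈ gph Ψ` the components of `P` lie in
the closures of the witnesses, so by the accessibility lemma (`accessibility`) the whole open
segment from `P` to `P₀` is in `K`, and `P` is in its closure.

The point `P₀` is built over a point `x₀ ∈ ri (dom G) ∩ ri Θ`. Lemma `exists_ri_lift` gives
`x₀ ∈ ri D` and a `y₀` with `(x₀, y₀) ∈ ri CG`: prolonging the segment from the projection of a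
point of `ri CG` slightly beyond `x₀` stays in `dom G`, and accessibility applies to the lifted
segment. Since `u` is free, the third component of `P₀` can be any point of `ri CF`.
-/

open Set Metric

noncomputable section

/-- A set is *nearly convex* if it lies between a convex set and its closure. -/
def NearlyConvex {E : Type*} [NormedAddCommGroup E] [NormedSpace ℝ E] (s : Set E) : Prop :=
  ∃ C : Set E, Convex ℝ C ∧ C ⊆ s ∧ s ⊆ closure C

/-- The *relative interior* of a set: points `a ∈ s` admitting `δ > 0` with
`B(a,δ) ∩ aff s ⊆ s`. -/
def ri {E : Type*} [NormedAddCommGroup E] [NormedSpace ℝ E] (s : Set E) : Set E :=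
  {a | a ∈ s ∧ ∃ δ > 0, Metric.ball a δ ∩ (affineSpan ℝ s : Set E) ⊆ s}

/-- The graph of a set-valued mapping. -/
def gph {E P : Type*} (F : E → Set P) : Set (E × P) := {q | q.2 ∈ F q.1}

/-- The domain of a set-valued mapping. -/
def domSV {E P : Type*} (F : E → Set P) : Set E := {x | (F x).Nonempty}

section Auxiliary

variable {E V : Type*} [NormedAddCommGroup E] [NormedSpace ℝ E]
  [NormedAddCommGroup V] [NormedSpace ℝ V]

theorem ri_nonempty [FiniteDimensional ℝ E] {C : Set E} (hC : Convex ℝ C) (hne : C.Nonempty) :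
    (ri C).Nonempty := by
  obtain ⟨a, ha⟩ := hne.intrinsicInterior hC
  refine ⟨a, intrinsicInterior_subset ha, ?_⟩
  obtain ⟨⟨b, hb⟩, hbi, rfl⟩ := ha
  obtain ⟨δ, hδ, hball⟩ := Metric.mem_nhds_iff.1 (mem_interior_iff_mem_nhds.1 hbi)
  refine ⟨δ, hδ, ?_⟩
  rintro z ⟨hz, hzA⟩
  exact hball (show (⟨z, hzA⟩ : affineSpan ℝ C) ∈ Metric.ball ⟨b, hb⟩ δ from hz)

theorem closure_subset_affineSpan [FiniteDimensional ℝ E] (C : Set E) :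
    closure C ⊆ affineSpan ℝ C :=
  closure_minimal (subset_affineSpan ℝ C) (AffineSubspace.closed_of_finiteDimensional _)

/-- Accessibility: a half-open segment from a point of the relative interior of a convex set to a
point of its closure stays in the relative interior. -/
theorem accessibility [FiniteDimensional ℝ E] {C : Set E} (hC : Convex ℝ C) {x x₀ : E}
    (hx : x ∈ closure C) (hx₀ : x₀ ∈ ri C) {a b : ℝ} (ha : 0 ≤ a) (hb : 0 < b)
    (hab : a + b = 1) : a • x + b • x₀ ∈ ri C := by
  obtain ⟨hx₀C, δ, hδ, hball⟩ := hx₀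
  have hA : ∀ w ∈ C, w ∈ affineSpan ℝ C := fun w hw => subset_affineSpan ℝ C hw
  have hxA : x ∈ affineSpan ℝ C := closure_subset_affineSpan C hx
  have hzA : a • x + b • x₀ ∈ affineSpan ℝ C := by
    have := AffineMap.lineMap_mem b hxA (hA _ hx₀C)
    rwa [AffineMap.lineMap_apply_module, show 1 - b = a by linarith] at this
  have hbδ : 0 < b * δ / 2 := by positivity
  -- Replace `x` by a nearby `c ∈ C` and absorb the error in the second point.
  have key : Metric.ball (a • x + b • x₀) (b * δ / 2) ∩ (affineSpan ℝ C : Set E) ⊆ C := by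
    rintro z ⟨hz, hzA'⟩
    obtain ⟨c, hc, hxc⟩ := Metric.mem_closure_iff.1 hx _ hbδ
    set v : E := a • (x - c) + (z - (a • x + b • x₀)) with hv
    have hvdir : b⁻¹ • v ∈ (affineSpan ℝ C).direction := by
      refine Submodule.smul_mem _ _ (Submodule.add_mem _ (Submodule.smul_mem _ _ ?_) ?_)
      · exact AffineSubspace.vsub_mem_direction hxA (hA c hc)
      · exact AffineSubspace.vsub_mem_direction hzA' hzA
    have hvn : ‖v‖ < b * δ := by
      rw [dist_eq_norm] at hxc
      rw [Metric.mem_ball, dist_eq_norm] at hz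
      have h1 : ‖a • (x - c)‖ ≤ ‖x - c‖ := by
        rw [norm_smul, Real.norm_of_nonneg ha]
        exact mul_le_of_le_one_left (norm_nonneg _) (by linarith)
      have h2 := norm_add_le (a • (x - c)) (z - (a • x + b • x₀))
      rw [hv]
      linarith
    have hmem : x₀ + b⁻¹ • v ∈ C := by
      refine hball ⟨?_, ?_⟩
      · rw [Metric.mem_ball, dist_eq_norm, add_sub_cancel_left, norm_smul, norm_inv,
          Real.norm_of_nonneg hb.le, inv_mul_lt_iff₀ hb]
        exact hvn
      · have := AffineSubspace.vadd_mem_of_mem_direction hvdir (hA _ hx₀C)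
        rwa [vadd_eq_add, add_comm] at this
    have hz_eq : z = a • c + b • (x₀ + b⁻¹ • v) := by
      rw [smul_add, smul_smul, mul_inv_cancel₀ hb.ne', one_smul, hv]
      module
    rw [hz_eq]
    exact hC hc hmem ha hb.le hab
  exact ⟨key ⟨Metric.mem_ball_self hbδ, hzA⟩, _, hbδ, key⟩

/-- A point of the relative interior of a linear image of a nearly convex set `S` is the image of
a point in the relative interior of the convex set witnessing the near convexity of `S`. -/
theorem exists_ri_lift [FiniteDimensional ℝ E] {C S : Set E} (hC : Convex ℝ C) (hCS : C ⊆ S)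
    (hSC : S ⊆ closure C) (L : E →ₗ[ℝ] V) {x₀ : V} (hx₀ : x₀ ∈ ri (L '' S)) :
    ∃ s ∈ ri C, L s = x₀ := by
  obtain ⟨⟨s₀, hs₀, hLs₀⟩, δ, hδ, hball⟩ := hx₀
  obtain ⟨c, hc⟩ := ri_nonempty hC (closure_nonempty_iff.1 ⟨s₀, hSC hs₀⟩)
  -- The step `ε` beyond `x₀` is small enough to stay within distance `δ`.
  obtain ⟨ε, hε, hεδ⟩ : ∃ ε : ℝ, 0 < ε ∧ ε * ‖x₀ - L c‖ < δ := by
    refine ⟨δ / (‖x₀ - L c‖ + 1), by positivity, ?_⟩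
    rw [div_mul_eq_mul_div, div_lt_iff₀ (by positivity)]
    nlinarith
  obtain ⟨s₁, hs₁, hLs₁⟩ : x₀ + ε • (x₀ - L c) ∈ L '' S := by
    refine hball ⟨?_, ?_⟩
    · rw [Metric.mem_ball, dist_eq_norm, add_sub_cancel_left, norm_smul,
        Real.norm_of_nonneg hε.le]
      exact hεδ
    · have hx₀A : x₀ ∈ affineSpan ℝ (L '' S) := subset_affineSpan ℝ _ ⟨s₀, hs₀, hLs₀⟩
      have hcA : L c ∈ affineSpan ℝ (L '' S) := subset_affineSpan ℝ _ ⟨c, hCS hc.1, rfl⟩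
      have := AffineSubspace.vadd_mem_of_mem_direction
        (Submodule.smul_mem _ ε (AffineSubspace.vsub_mem_direction hx₀A hcA)) hx₀A
      rwa [vadd_eq_add, vsub_eq_sub, add_comm] at this
  have h1 : (1 + ε) ≠ 0 := by positivity
  refine ⟨(1 + ε)⁻¹ • s₁ + (ε / (1 + ε)) • c,
    accessibility hC (hSC hs₁) hc (by positivity) (by positivity) (by field_simp), ?_⟩
  rw [map_add, map_smul, map_smul, hLs₁]
  match_scalars <;> field_simp <;> ring

end Auxiliary

theorem composite_shifted_nearlyConvex (n p q : ℕ)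
    (Θ : Set (EuclideanSpace ℝ (Fin n)))
    (F : EuclideanSpace ℝ (Fin n) → Set (EuclideanSpace ℝ (Fin p)))
    (G : EuclideanSpace ℝ (Fin n) → Set (EuclideanSpace ℝ (Fin q)))
    (hΘ : NearlyConvex Θ) (hF : NearlyConvex (gph F)) (hG : NearlyConvex (gph G))
    (hqc : (ri (domSV F) ∩ ri (domSV G) ∩ ri Θ).Nonempty) :
    NearlyConvex (gph (fun t : EuclideanSpace ℝ (Fin n) × EuclideanSpace ℝ (Fin n) ×
        EuclideanSpace ℝ (Fin q) =>
      {z | t.1 ∈ Θ ∧ t.2.2 ∈ G t.1 ∧ z ∈ F (t.1 + t.2.1)})) := by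
  obtain ⟨x₀, ⟨hx₀F, hx₀G⟩, hx₀Θ⟩ := hqc
  obtain ⟨D, hD, hDΘ, hΘD⟩ := hΘ
  obtain ⟨CF, hCF, hCFF, hFCF⟩ := hF
  obtain ⟨CG, hCG, hCGG, hGCG⟩ := hG
  have hx₀D : x₀ ∈ ri D := by
    obtain ⟨s, hs, rfl⟩ := exists_ri_lift hD hDΘ hΘD LinearMap.id (x₀ := x₀) (by simpa using hx₀Θ)
    exact hs
  have hdom : domSV G = LinearMap.fst ℝ _ _ '' gph G := by
    ext x
    constructor
    · rintro ⟨y, hy⟩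
      exact ⟨(x, y), hy, rfl⟩
    · rintro ⟨⟨x', y⟩, hy, rfl⟩
      exact ⟨y, hy⟩
  rw [hdom] at hx₀G
  obtain ⟨⟨x', y₀⟩, hy₀, hx'⟩ := exists_ri_lift hCG hCGG hGCG _ hx₀G
  obtain rfl : x' = x₀ := hx'
  obtain ⟨z₁, hz₁⟩ := hx₀F.1
  have hCFne : CF.Nonempty := closure_nonempty_iff.1 ⟨(x', z₁), hFCF hz₁⟩
  obtain ⟨⟨w₀, z₀⟩, hwz⟩ := ri_nonempty hCF hCFne
  refine ⟨{P | P.1.1 ∈ D ∧ (P.1.1, P.1.2.2) ∈ CG ∧ (P.1.1 + P.1.2.1, P.2) ∈ CF}, ?_, ?_, ?_⟩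
  · rintro ⟨⟨x, u, y⟩, z⟩ ⟨h1, h2, h3⟩ ⟨⟨x₂, u₂, y₂⟩, z₂⟩ ⟨k1, k2, k3⟩ a b ha hb hab
    refine ⟨hD h1 k1 ha hb hab, hCG h2 k2 ha hb hab, ?_⟩
    convert hCF h3 k3 ha hb hab using 1
    refine Prod.ext ?_ rfl
    change (a • x + b • x₂) + (a • u + b • u₂) = a • (x + u) + b • (x₂ + u₂)
    module
  · rintro ⟨⟨x, u, y⟩, z⟩ ⟨h1, h2, h3⟩
    exact ⟨hDΘ h1, hCGG h2, hCFF h3⟩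
  · rintro ⟨⟨x, u, y⟩, z⟩ ⟨h1, h2, h3⟩
    -- The `u`-component `w₀ - x'` is chosen so that `(x' + u, z₀)` is the point `(w₀, z₀) ∈ ri CF`.
    refine closure_mono (s := openSegment ℝ ((x, u, y), z) ((x', w₀ - x', y₀), z₀)) ?_ ?_
    · rintro _ ⟨a, b, ha, hb, hab, rfl⟩
      refine ⟨(accessibility hD (hΘD h1) hx₀D ha.le hb hab).1,
        (accessibility hCG (hGCG (show (x, y) ∈ gph G from h2)) hy₀ ha.le hb hab).1, ?_⟩
      convert (accessibility hCF (hFCF (show (x + u, z) ∈ gph F from h3)) hwz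
        ha.le hb hab).1 using 1
      refine Prod.ext ?_ rfl
      change (a • x + b • x') + (a • u + b • (w₀ - x')) = a • (x + u) + b • w₀
      module
    · rw [closure_openSegment]
      exact left_mem_segment ℝ _ _
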